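/- Let A > 0 and α > 2 be real numbers. For y = (y₁, y₂) ∈ ℝ² with z = y₁ + i y₂ ≠ 0 and arg z ∈ (−π, π), and for s > 0, define v(y,s) = Re[ (1/s) · exp( −A z^α / s^α + |y|²/(4s) ) ], where z^α is the principal branch. Then v is a smooth solution of the backward heat equation ∂ₛv + Δv = 0 on {(y,s) : y₁ + i y₂ ∈ ℂ ∖ (−∞,0], s > 0}. -/

import Mathlib

open Real Set Filter

/-- The Laplacian of `f` at `x`, computed as the sum of the second partial
derivatives in the coordinate directions. -/
noncomputable def lap {n : ℕ} (f : EuclideanSpace ℝ (Fin n) → ℝ)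
    (x : EuclideanSpace ℝ (Fin n)) : ℝ :=
  ∑ i, fderiv ℝ (fun y => fderiv ℝ f y (EuclideanSpace.single i 1)) x
      (EuclideanSpace.single i 1)

/-- Escauriaza's function
`v(y,s) = Re[(1/s) exp(-A z^α / s^α + |y|²/(4s))]`, `z = y₁ + i y₂`,
with the principal branch of `z^α`. -/
noncomputable def escV (A α : ℝ) (y : EuclideanSpace ℝ (Fin 2)) (s : ℝ) : ℝ :=
  ((1 / (s : ℂ)) * Complex.exp
      (-(A : ℂ) * ((y 0 : ℂ) + (y 1 : ℂ) * Complex.I) ^ (α : ℂ) / ((s ^ α : ℝ) : ℂ)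
        + ((‖y‖ ^ 2 / (4 * s) : ℝ) : ℂ))).re

/-!
For functions `V(y, s) = s ^ (-d / 2) exp (|y|² / (4 s)) u (y / s)` on a `d`-dimensional space, all
terms of `∂ₛV` cancel against terms of `ΔV`, and what is left of `∂ₛV + ΔV` is `s⁻²` times the same
transform of `Δu`. Since `(z / s) ^ α = z ^ α / s ^ α` for `s > 0`, Escauriaza's function is the
transform of `Re exp (-A z ^ α)`, which is harmonic because it is the real part of a holomorphic
function.
-/

open Module Topology InnerProductSpace
open scoped Laplacian

section SecondDerivative

variable {E F : Type*} [NormedAddCommGroup E] [NormedSpace ℝ E]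
  [NormedAddCommGroup F] [NormedSpace ℝ F] {x : E}

lemma differentiableAt_fderiv_of_contDiffAt {f : E → F} (hf : ContDiffAt ℝ 2 f x) :
    DifferentiableAt ℝ (fderiv ℝ f) x :=
  (hf.fderiv_right (m := 1) (by norm_num)).differentiableAt one_ne_zero

lemma fderiv_fderiv_apply_eq_iteratedFDeriv {f : E → F} (hf : ContDiffAt ℝ 2 f x) (v w : E) :
    fderiv ℝ (fun y ↦ fderiv ℝ f y v) x w = iteratedFDeriv ℝ 2 f x ![w, v] := by
  rw [iteratedFDeriv_two_apply,
    fderiv_clm_apply (differentiableAt_fderiv_of_contDiffAt hf) (differentiableAt_const v)]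
  simp

lemma iteratedFDeriv_two_smul_apply_self {g : E → ℝ} {u : E → F} (hg : ContDiffAt ℝ 2 g x)
    (hu : ContDiffAt ℝ 2 u x) (v : E) :
    iteratedFDeriv ℝ 2 (fun y ↦ g y • u y) x ![v, v] =
      iteratedFDeriv ℝ 2 g x ![v, v] • u x + (2 : ℝ) • fderiv ℝ g x v • fderiv ℝ u x v +
        g x • iteratedFDeriv ℝ 2 u x ![v, v] := by
  have product_rule : (fun y ↦ fderiv ℝ (fun z ↦ g z • u z) y v) =ᶠ[𝓝 x]
      fun y ↦ g y • fderiv ℝ u y v + fderiv ℝ g y v • u y := by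
    filter_upwards [hg.eventually (by simp), hu.eventually (by simp)] with y hgy huy
    rw [fderiv_fun_smul (hgy.differentiableAt two_ne_zero) (huy.differentiableAt two_ne_zero)]
    simp
  have hg₁ : DifferentiableAt ℝ g x := hg.differentiableAt two_ne_zero
  have hu₁ : DifferentiableAt ℝ u x := hu.differentiableAt two_ne_zero
  have hg₂ : DifferentiableAt ℝ (fun y ↦ fderiv ℝ g y v) x :=
    (differentiableAt_fderiv_of_contDiffAt hg).clm_apply (differentiableAt_const v)
  have hu₂ : DifferentiableAt ℝ (fun y ↦ fderiv ℝ u y v) x :=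
    (differentiableAt_fderiv_of_contDiffAt hu).clm_apply (differentiableAt_const v)
  rw [← fderiv_fderiv_apply_eq_iteratedFDeriv (hg.fun_smul hu), product_rule.fderiv_eq,
    fderiv_fun_add (hg₁.fun_smul hu₂) (hg₂.fun_smul hu₁), fderiv_fun_smul hg₁ hu₂,
    fderiv_fun_smul hg₂ hu₁, ← fderiv_fderiv_apply_eq_iteratedFDeriv hg,
    ← fderiv_fderiv_apply_eq_iteratedFDeriv hu]
  simp only [add_apply, smul_apply, ContinuousLinearMap.smulRight_apply]
  module

end SecondDerivative

section Gaussian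

variable {E : Type*} [NormedAddCommGroup E] [InnerProductSpace ℝ E]

lemma contDiff_exp_mul_norm_sq (c : ℝ) {n : WithTop ℕ∞} :
    ContDiff ℝ n fun y : E ↦ exp (c * ‖y‖ ^ 2) :=
  (contDiff_const.mul (contDiff_norm_sq ℝ)).exp

lemma hasFDerivAt_exp_mul_norm_sq (c : ℝ) (x : E) :
    HasFDerivAt (fun y : E ↦ exp (c * ‖y‖ ^ 2))
      ((2 * c * exp (c * ‖x‖ ^ 2)) • innerSL ℝ x) x := by
  convert ((hasStrictFDerivAt_norm_sq x).hasFDerivAt.const_mul c).exp using 1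
  module

lemma iteratedFDeriv_two_exp_mul_norm_sq (c : ℝ) (x v : E) :
    iteratedFDeriv ℝ 2 (fun y : E ↦ exp (c * ‖y‖ ^ 2)) x ![v, v] =
      (4 * c ^ 2 * inner ℝ x v ^ 2 + 2 * c * ‖v‖ ^ 2) * exp (c * ‖x‖ ^ 2) := by
  have first_derivative : (fun y : E ↦ fderiv ℝ (fun z : E ↦ exp (c * ‖z‖ ^ 2)) y v) =
      fun y ↦ 2 * c * exp (c * ‖y‖ ^ 2) * innerSL ℝ v y := by
    funext y
    simp [(hasFDerivAt_exp_mul_norm_sq c y).fderiv, real_inner_comm]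
  rw [← fderiv_fderiv_apply_eq_iteratedFDeriv (contDiff_exp_mul_norm_sq c).contDiffAt,
    first_derivative, (((hasFDerivAt_exp_mul_norm_sq c x).const_mul (2 * c)).fun_mul
      (innerSL ℝ v).hasFDerivAt).fderiv]
  simp only [add_apply, smul_apply, innerSL_apply_apply, real_inner_self_eq_norm_sq,
    real_inner_comm x v, smul_eq_mul]
  ring

end Gaussian

section Laplacian

variable {E E' F ι : Type*} [NormedAddCommGroup E] [InnerProductSpace ℝ E] [FiniteDimensional ℝ E]
  [NormedAddCommGroup E'] [InnerProductSpace ℝ E']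
  [NormedAddCommGroup F] [NormedSpace ℝ F] [Fintype ι]

lemma lap_eq_laplacian {n : ℕ} {f : EuclideanSpace ℝ (Fin n) → ℝ} {x : EuclideanSpace ℝ (Fin n)}
    (hf : ContDiffAt ℝ 2 f x) : lap f x = Δ f x := by
  simp only [lap, fderiv_fderiv_apply_eq_iteratedFDeriv hf,
    laplacian_eq_iteratedFDeriv_orthonormalBasis f (EuclideanSpace.basisFun (Fin n) ℝ),
    EuclideanSpace.basisFun_apply]

lemma laplacian_comp_continuousLinearEquiv (b : OrthonormalBasis ι ℝ E) (L : E ≃L[ℝ] E')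
    (f : E' → F) (x : E) :
    Δ (fun y ↦ f (L y)) x = ∑ i, iteratedFDeriv ℝ 2 f (L x) ![L (b i), L (b i)] := by
  have chain_rule : iteratedFDeriv ℝ 2 (fun y ↦ f (L y)) x =
      (iteratedFDeriv ℝ 2 f (L x)).compContinuousLinearMap fun _ ↦ L := by
    simpa only [preimage_univ, iteratedFDerivWithin_univ] using!
      L.iteratedFDerivWithin_comp_right f uniqueDiffOn_univ (mem_univ (L x)) 2
  rw [laplacian_eq_iteratedFDeriv_orthonormalBasis _ b]
  refine Finset.sum_congr rfl fun i _ ↦ ?_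
  rw [chain_rule, ContinuousMultilinearMap.compContinuousLinearMap_apply]
  congr 1
  ext j
  fin_cases j <;> rfl

variable [FiniteDimensional ℝ E']

lemma laplacian_comp_linearIsometryEquiv (L : E ≃ₗᵢ[ℝ] E') (f : E' → F) (x : E) :
    Δ (fun y ↦ f (L y)) x = Δ f (L x) := by
  have b := stdOrthonormalBasis ℝ E
  rw [laplacian_eq_iteratedFDeriv_orthonormalBasis f (b.map L)]
  exact laplacian_comp_continuousLinearEquiv b L.toContinuousLinearEquiv f x

lemma laplacian_comp_const_smul (c : ℝ) (f : E → F) (x : E) :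
    Δ (fun y ↦ f (c • y)) x = c ^ 2 • Δ f (c • x) := by
  rcases eq_or_ne c 0 with rfl | hc
  · simp
  have b := stdOrthonormalBasis ℝ E
  let L : E ≃L[ℝ] E := ContinuousLinearEquiv.smulLeft (Units.mk0 c hc)
  refine (laplacian_comp_continuousLinearEquiv b L f x).trans ?_
  rw [laplacian_eq_iteratedFDeriv_orthonormalBasis f b, Finset.smul_sum]
  refine Finset.sum_congr rfl fun i _ ↦ ?_
  change iteratedFDeriv ℝ 2 f (c • x) ![c • b i, c • b i] = _
  simp only [iteratedFDeriv_two_apply]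
  simp [smul_smul, sq]

lemma harmonicAt_comp_linearIsometryEquiv (L : E ≃ₗᵢ[ℝ] E') {f : E' → F} {x : E}
    (hf : HarmonicAt f (L x)) : HarmonicAt (fun y ↦ f (L y)) x := by
  refine ⟨hf.1.comp x L.contDiff.contDiffAt, ?_⟩
  filter_upwards [L.continuous.continuousAt.eventually hf.2] with y hy
  rw [laplacian_comp_linearIsometryEquiv, hy]
  rfl

lemma laplacian_smul_of_contDiffAt (b : OrthonormalBasis ι ℝ E) {g : E → ℝ} {f : E → F} {x : E}
    (hg : ContDiffAt ℝ 2 g x) (hf : ContDiffAt ℝ 2 f x) :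
    Δ (fun y ↦ g y • f y) x = Δ g x • f x +
      (2 : ℝ) • ∑ i, fderiv ℝ g x (b i) • fderiv ℝ f x (b i) + g x • Δ f x := by
  simp only [laplacian_eq_iteratedFDeriv_orthonormalBasis _ b,
    iteratedFDeriv_two_smul_apply_self hg hf, Finset.sum_add_distrib, Finset.sum_smul,
    Finset.smul_sum]

lemma laplacian_exp_mul_norm_sq (c : ℝ) (x : E) :
    Δ (fun y : E ↦ exp (c * ‖y‖ ^ 2)) x =
      (4 * c ^ 2 * ‖x‖ ^ 2 + 2 * c * finrank ℝ E) * exp (c * ‖x‖ ^ 2) := by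
  have b := stdOrthonormalBasis ℝ E
  simp only [laplacian_eq_iteratedFDeriv_orthonormalBasis _ b, iteratedFDeriv_two_exp_mul_norm_sq,
    ← Finset.sum_mul, Finset.sum_add_distrib, ← Finset.mul_sum, b.sum_sq_inner_left, b.norm_eq_one]
  simp only [one_pow, Finset.sum_const, Finset.card_univ, Fintype.card_fin, nsmul_eq_mul, mul_one]
  ring

lemma laplacian_exp_mul_norm_sq_smul (c : ℝ) {f : E → F} {x : E} (hf : ContDiffAt ℝ 2 f x) :
    Δ (fun y ↦ exp (c * ‖y‖ ^ 2) • f y) x =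
      exp (c * ‖x‖ ^ 2) • ((4 * c ^ 2 * ‖x‖ ^ 2 + 2 * c * finrank ℝ E) • f x +
        (4 * c) • fderiv ℝ f x x + Δ f x) := by
  have b := stdOrthonormalBasis ℝ E
  have cross_term : ∑ i, inner ℝ x (b i) • fderiv ℝ f x (b i) = fderiv ℝ f x x := by
    calc ∑ i, inner ℝ x (b i) • fderiv ℝ f x (b i)
        = fderiv ℝ f x (∑ i, inner ℝ (b i) x • b i) := by
          simp only [map_sum, map_smul, real_inner_comm]
      _ = fderiv ℝ f x x := by rw [b.sum_repr' x]
  rw [laplacian_smul_of_contDiffAt b (contDiff_exp_mul_norm_sq c).contDiffAt hf,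
    laplacian_exp_mul_norm_sq, (hasFDerivAt_exp_mul_norm_sq c x).fderiv]
  simp only [smul_apply, innerSL_apply_apply, smul_assoc, ← Finset.smul_sum, cross_term]
  module

end Laplacian

section Appell

variable {E F : Type*} [NormedAddCommGroup E] [InnerProductSpace ℝ E] [NormedAddCommGroup F]
  [NormedSpace ℝ F] {u : E → F} {y : E} {s : ℝ}

/-- The Appell transform `s ^ (-d / 2) exp (|y|² / (4 s)) u (y / s)`, `d = dim E`, of a
time-independent function `u`; it maps harmonic functions to solutions of the backward heat
equation. -/
noncomputable def appell (u : E → F) (y : E) (s : ℝ) : F :=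
  (s ^ (-(finrank ℝ E : ℝ) / 2) * exp (‖y‖ ^ 2 / (4 * s))) • u (s⁻¹ • y)

lemma contDiffAt_appell {n : WithTop ℕ∞} (hu : ContDiffAt ℝ n u (s⁻¹ • y)) (hs : s ≠ 0) :
    ContDiffAt ℝ n (fun p : E × ℝ ↦ appell u p.1 p.2) (y, s) := by
  have hpow : ContDiffAt ℝ n (fun p : E × ℝ ↦ p.2 ^ (-(finrank ℝ E : ℝ) / 2)) (y, s) :=
    contDiffAt_snd.rpow_const_of_ne hs
  have hexp : ContDiffAt ℝ n (fun p : E × ℝ ↦ exp (‖p.1‖ ^ 2 / (4 * p.2))) (y, s) :=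
    ((contDiffAt_fst.norm_sq ℝ).div (contDiffAt_const.mul contDiffAt_snd) (by simpa)).exp
  have hcomp : ContDiffAt ℝ n (fun p : E × ℝ ↦ u (p.2⁻¹ • p.1)) (y, s) :=
    ContDiffAt.comp (y, s) hu ((contDiffAt_snd.inv hs).smul contDiffAt_fst)
  exact (hpow.mul hexp).smul hcomp

lemma hasDerivAt_appell (hu : DifferentiableAt ℝ u (s⁻¹ • y)) (hs : s ≠ 0) :
    HasDerivAt (appell u y)
      (-((finrank ℝ E / (2 * s) + ‖y‖ ^ 2 / (4 * s ^ 2)) • appell u y s +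
        (s ^ 2)⁻¹ • appell (fun x ↦ fderiv ℝ u x y) y s)) s := by
  have hpow := Real.hasDerivAt_rpow_const (p := -(finrank ℝ E : ℝ) / 2) (Or.inl hs)
  have hexp := ((hasDerivAt_const s (‖y‖ ^ 2)).fun_div ((hasDerivAt_id' s).const_mul 4)
    (by simpa)).exp
  have hcomp : HasDerivAt (fun t : ℝ ↦ u (t⁻¹ • y)) (fderiv ℝ u (s⁻¹ • y) (-(s ^ 2)⁻¹ • y)) s :=
    hu.hasFDerivAt.comp_hasDerivAt s ((hasDerivAt_inv hs).smul_const y)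
  refine ((hpow.fun_mul hexp).fun_smul hcomp).congr_deriv ?_
  simp only [appell, rpow_sub_one hs, map_smul]
  match_scalars <;> field_simp
  ring

variable [FiniteDimensional ℝ E]

lemma laplacian_appell (hu : ContDiffAt ℝ 2 u (s⁻¹ • y)) (hs : s ≠ 0) :
    Δ (fun x ↦ appell u x s) y =
      (finrank ℝ E / (2 * s) + ‖y‖ ^ 2 / (4 * s ^ 2)) • appell u y s +
        (s ^ 2)⁻¹ • appell (fun x ↦ fderiv ℝ u x y) y s + (s ^ 2)⁻¹ • appell (Δ u) y s := by
  have hcomp : ContDiffAt ℝ 2 (fun x ↦ u (s⁻¹ • x)) y :=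
    ContDiffAt.comp y hu (contDiffAt_const.smul contDiffAt_id)
  have hgauss : (fun x ↦ appell u x s) = s ^ (-(finrank ℝ E : ℝ) / 2) •
      fun x ↦ exp ((4 * s)⁻¹ * ‖x‖ ^ 2) • u (s⁻¹ • x) := by
    funext x
    simp only [appell, mul_smul, div_eq_inv_mul (‖x‖ ^ 2), Pi.smul_apply]
  have hfderiv : fderiv ℝ (fun x ↦ u (s⁻¹ • x)) y y = s⁻¹ • fderiv ℝ u (s⁻¹ • y) y := by
    simp [fderiv_comp_smul]
  rw [hgauss, laplacian_smul _ ((contDiff_exp_mul_norm_sq _).contDiffAt.fun_smul hcomp),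
    laplacian_exp_mul_norm_sq_smul _ hcomp, hfderiv, laplacian_comp_const_smul]
  simp only [appell, div_eq_inv_mul (‖y‖ ^ 2)]
  match_scalars <;> field_simp
  ring

theorem deriv_appell_add_laplacian_appell (hu : ContDiffAt ℝ 2 u (s⁻¹ • y)) (hs : s ≠ 0) :
    deriv (appell u y) s + Δ (fun x ↦ appell u x s) y = (s ^ 2)⁻¹ • appell (Δ u) y s := by
  rw [(hasDerivAt_appell (hu.differentiableAt two_ne_zero) hs).deriv, laplacian_appell hu hs]
  abel

theorem deriv_appell_add_laplacian_appell_eq_zero (hu : HarmonicAt u (s⁻¹ • y)) (hs : s ≠ 0) :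
    deriv (appell u y) s + Δ (fun x ↦ appell u x s) y = 0 := by
  rw [deriv_appell_add_laplacian_appell hu.1 hs, appell, hu.2.eq_of_nhds]
  simp

end Appell

section Escauriaza

lemma ofReal_mul_cpow {r : ℝ} (hr : 0 < r) (z w : ℂ) :
    ((r : ℂ) * z) ^ w = (r : ℂ) ^ w * z ^ w := by
  have hr₀ : (r : ℂ) ≠ 0 := Complex.ofReal_ne_zero.2 hr.ne'
  rcases eq_or_ne z 0 with rfl | hz
  · rcases eq_or_ne w 0 with rfl | hw
    · simp
    · simp [hw]
  · rw [Complex.cpow_def_of_ne_zero (mul_ne_zero hr₀ hz), Complex.cpow_def_of_ne_zero hr₀,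
      Complex.cpow_def_of_ne_zero hz, Complex.log_ofReal_mul hr hz, Complex.ofReal_log hr.le,
      add_mul, Complex.exp_add]

lemma ofReal_mul_mem_slitPlane {r : ℝ} (hr : 0 < r) {z : ℂ} (hz : z ∈ Complex.slitPlane) :
    (r : ℂ) * z ∈ Complex.slitPlane := by
  simpa [Complex.mem_slitPlane_iff, hr, hr.ne'] using hz

lemma analyticAt_exp_neg_mul_cpow (A α : ℂ) {z : ℂ} (hz : z ∈ Complex.slitPlane) :
    AnalyticAt ℂ (fun z ↦ Complex.exp (-A * z ^ α)) z :=
  (analyticAt_const.mul (analyticAt_id.cpow analyticAt_const hz)).cexp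

/-- The identification `y ↦ y₁ + i y₂` of the Euclidean plane with `ℂ`. -/
noncomputable abbrev planeToComplex : EuclideanSpace ℝ (Fin 2) ≃ₗᵢ[ℝ] ℂ :=
  Complex.orthonormalBasisOneI.repr.symm

/-- The harmonic function `Re exp (-A z ^ α)` on the slit plane, whose Appell transform is
`escV A α`. -/
noncomputable def reExpNegCpow (A α : ℝ) (y : EuclideanSpace ℝ (Fin 2)) : ℝ :=
  (Complex.exp (-A * planeToComplex y ^ (α : ℂ))).re

variable (A α : ℝ) {y : EuclideanSpace ℝ (Fin 2)} {s : ℝ}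

lemma contDiffAt_reExpNegCpow (hy : planeToComplex y ∈ Complex.slitPlane) {n : WithTop ℕ∞} :
    ContDiffAt ℝ n (reExpNegCpow A α) y :=
  Complex.reCLM.contDiff.contDiffAt.comp y
    (((analyticAt_exp_neg_mul_cpow A α hy).contDiffAt.restrict_scalars ℝ).comp y
      planeToComplex.contDiff.contDiffAt)

lemma harmonicAt_reExpNegCpow (hy : planeToComplex y ∈ Complex.slitPlane) :
    HarmonicAt (reExpNegCpow A α) y :=
  harmonicAt_comp_linearIsometryEquiv planeToComplex
    (analyticAt_exp_neg_mul_cpow A α hy).harmonicAt_re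

lemma planeToComplex_inv_smul_mem_slitPlane (hy : planeToComplex y ∈ Complex.slitPlane)
    (hs : 0 < s) : planeToComplex (s⁻¹ • y) ∈ Complex.slitPlane := by
  rw [map_smul, Complex.real_smul]
  exact ofReal_mul_mem_slitPlane (inv_pos.2 hs) hy

lemma escV_eq_appell (hs : 0 < s) (y : EuclideanSpace ℝ (Fin 2)) :
    escV A α y s = appell (reExpNegCpow A α) y s := by
  have hpow : planeToComplex (s⁻¹ • y) ^ (α : ℂ) =
      planeToComplex y ^ (α : ℂ) / ((s ^ α : ℝ) : ℂ) := by
    rw [map_smul, Complex.real_smul, ofReal_mul_cpow (inv_pos.2 hs),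
      ← Complex.ofReal_cpow (inv_pos.2 hs).le, Real.inv_rpow hs.le, Complex.ofReal_inv,
      div_eq_inv_mul]
  have hone : s ^ (-(finrank ℝ (EuclideanSpace ℝ (Fin 2)) : ℝ) / 2) = s⁻¹ := by
    rw [finrank_euclideanSpace_fin, Nat.cast_ofNat, neg_div_self two_ne_zero, rpow_neg_one]
  rw [appell, reExpNegCpow, hpow, hone, escV, ← Complex.orthonormalBasisOneI_repr_symm_apply,
    Complex.exp_add, ← Complex.ofReal_exp, smul_eq_mul, ← Complex.re_ofReal_mul]
  congr 1
  push_cast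
  ring_nf

lemma contDiffAt_appell_reExpNegCpow (hy : planeToComplex y ∈ Complex.slitPlane) (hs : 0 < s)
    {n : WithTop ℕ∞} : ContDiffAt ℝ n
      (fun p : EuclideanSpace ℝ (Fin 2) × ℝ ↦ appell (reExpNegCpow A α) p.1 p.2) (y, s) :=
  contDiffAt_appell
    (contDiffAt_reExpNegCpow A α (planeToComplex_inv_smul_mem_slitPlane hy hs)) hs.ne'

end Escauriaza

theorem escV_solves_backward_heat_general (A α : ℝ) :
    ContDiffOn ℝ (⊤ : ℕ∞) (fun p : EuclideanSpace ℝ (Fin 2) × ℝ => escV A α p.1 p.2)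
      {p : EuclideanSpace ℝ (Fin 2) × ℝ |
        ((p.1 0 : ℂ) + (p.1 1 : ℂ) * Complex.I) ∈ Complex.slitPlane ∧ 0 < p.2} ∧
    ∀ (y : EuclideanSpace ℝ (Fin 2)) (s : ℝ),
      ((y 0 : ℂ) + (y 1 : ℂ) * Complex.I) ∈ Complex.slitPlane → 0 < s →
      deriv (escV A α y) s + lap (fun z => escV A α z s) y = 0 := by
  simp only [← Complex.orthonormalBasisOneI_repr_symm_apply]
  refine ⟨fun p hp ↦ ?_, fun y s hy hs ↦ ?_⟩
  · exact (contDiffAt_appell_reExpNegCpow A α hp.1 hp.2).contDiffWithinAt.congr_of_mem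
      (fun q hq ↦ escV_eq_appell A α hq.2 q.1) hp
  · have escV_eventuallyEq : escV A α y =ᶠ[𝓝 s] appell (reExpNegCpow A α) y :=
      (eventually_gt_nhds hs).mono fun t ht ↦ escV_eq_appell A α ht y
    have appell_contDiffAt : ContDiffAt ℝ 2 (fun z ↦ appell (reExpNegCpow A α) z s) y :=
      (contDiffAt_appell_reExpNegCpow A α hy hs).comp y (contDiffAt_id.prodMk contDiffAt_const)
    rw [escV_eventuallyEq.deriv_eq, funext (escV_eq_appell A α hs),
      lap_eq_laplacian appell_contDiffAt]
    exact deriv_appell_add_laplacian_appell_eq_zero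
      (harmonicAt_reExpNegCpow A α (planeToComplex_inv_smul_mem_slitPlane hy hs)) hs.ne'

/-- `v(y,s) = Re[(1/s) exp(-A z^α/s^α + |y|²/(4s))]` is a smooth solution of the
backward heat equation `∂ₛv + Δv = 0` on `{(y,s) : y₁ + i y₂ ∈ ℂ ∖ (-∞,0], s > 0}`. -/
theorem escV_solves_backward_heat (A α : ℝ) (hA : 0 < A) (hα : 2 < α) :
    ContDiffOn ℝ (⊤ : ℕ∞) (fun p : EuclideanSpace ℝ (Fin 2) × ℝ => escV A α p.1 p.2)
      {p : EuclideanSpace ℝ (Fin 2) × ℝ |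
        ((p.1 0 : ℂ) + (p.1 1 : ℂ) * Complex.I) ∈ Complex.slitPlane ∧ 0 < p.2} ∧
    ∀ (y : EuclideanSpace ℝ (Fin 2)) (s : ℝ),
      ((y 0 : ℂ) + (y 1 : ℂ) * Complex.I) ∈ Complex.slitPlane → 0 < s →
      deriv (escV A α y) s + lap (fun z => escV A α z s) y = 0 :=
  escV_solves_backward_heat_general A α
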